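/- Consider the natural action of the symmetric group on Fin 6 on collections of 3-element subsets of Fin 6 (a permutation σ sends a collection C to the collection of images σ(T) for T ∈ C; this action preserves adequacy). The number of orbits of this action on the set of adequate collections of 3-element subsets of Fin 6 is exactly 175. -/

import Mathlib

/-- A collection `C` of 3-element subsets of `Fin m` is adequate if for every
`i : Fin m` and every `T ∈ C` there is a 2-element subset `S ⊆ T` with `i ∉ S`
and `S ∪ {i} ∈ C`. -/
def Adequate {m : ℕ} (C : Finset (Finset (Fin m))) : Prop :=
  ∀ i : Fin m, ∀ T ∈ C, ∃ S : Finset (Fin m),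
    S ⊆ T ∧ S.card = 2 ∧ i ∉ S ∧ insert i S ∈ C

namespace Orb

/-! ### Data -/

/-- The twenty triples. -/
def tri : Fin 20 → Finset (Fin 6) :=
  ![{0, 1, 2}, {0, 1, 3}, {0, 1, 4}, {0, 1, 5}, {0, 2, 3}, {0, 2, 4}, {0, 2, 5}, {0, 3, 4}, {0, 3, 5}, {0, 4, 5}, {1, 2, 3}, {1, 2, 4}, {1, 2, 5}, {1, 3, 4}, {1, 3, 5}, {1, 4, 5}, {2, 3, 4}, {2, 3, 5}, {2, 4, 5}, {3, 4, 5}]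

/-- For every adjacent transposition, the pairs of triples that it exchanges. -/
def pairs : Fin 5 → List (Fin 20 × Fin 20) :=
  ![[(4, 10), (5, 11), (6, 12), (7, 13), (8, 14), (9, 15)],
   [(1, 4), (2, 5), (3, 6), (13, 16), (14, 17), (15, 18)],
   [(0, 1), (5, 7), (6, 8), (11, 13), (12, 14), (18, 19)],
   [(1, 2), (4, 5), (8, 9), (10, 11), (14, 15), (17, 18)],
   [(2, 3), (5, 6), (7, 8), (11, 12), (13, 14), (16, 17)]]

/-- Orbit representatives, as 20-bit codes. -/
def reps : List ℕ :=
  [0, 15, 126, 127, 495, 511, 1023, 7294, 7295, 7571, 7580, 7581, 7583, 7661, 7662, 7663, 7678, 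
7679, 8119, 8122, 8123, 8126, 8127, 8190, 8191, 31200, 31203, 31215, 31217, 31219, 31229, 
31231, 31446, 31447, 31455, 31478, 31479, 31482, 31483, 31487, 31733, 31735, 31743, 32243, 
32252, 32253, 32255, 32502, 32503, 32504, 32505, 32506, 32507, 32510, 32511, 32741, 32743, 
32751, 32756, 32757, 32759, 32764, 32765, 32767, 65520, 65521, 65523, 65527, 65535, 227823, 
227839, 228023, 228025, 228027, 228029, 228031, 228047, 228061, 228063, 228079, 228094, 
228095, 228335, 228351, 228863, 229047, 229048, 229049, 229051, 229052, 229053, 229055, 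
229069, 229071, 229084, 229085, 229087, 229101, 229102, 229103, 229118, 229119, 229357, 
229359, 229375, 241500, 241501, 241503, 241514, 241515, 241518, 241519, 241534, 241535, 
241643, 241647, 241663, 242467, 242471, 242479, 242487, 242495, 242543, 242559, 242687, 
243511, 243519, 243558, 243559, 243566, 243567, 243579, 243582, 243583, 243683, 243687, 
243693, 243695, 243699, 243702, 243703, 243708, 243709, 243711, 245630, 245631, 245687, 
245691, 245693, 245695, 245724, 245725, 245727, 245738, 245739, 245742, 245743, 245758, 
245759, 261091, 261095, 261103, 261111, 261117, 261119, 262135, 262140, 262141, 262143, 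
520157, 520159, 520191, 524286, 524287, 1048575]

/-! ### Truth tables as large natural numbers -/

/-- Repeated doubling of a block of length `2 ^ j`. -/
def dbl : ℕ → ℕ → ℕ → ℕ
  | 0, _, B => B
  | t + 1, j, B => dbl t (j + 1) (B ||| (B <<< (2 ^ j)))

/-- Truth table of the variable `k` among `20`. -/
def V (k : ℕ) : ℕ := dbl (19 - k) (k + 1) ((2 ^ (2 ^ k) - 1) <<< (2 ^ k))

/-- Evaluate a number before passing it on. -/
def force {α : Type} (x : ℕ) (k : ℕ → α) : α :=
  Nat.rec (motive := fun _ => α) (k 0) (fun n _ => k (n + 1)) x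

theorem force_eq {α : Type} (x : ℕ) (k : ℕ → α) : force x k = k x := by
  cases x <;> rfl

/-- Exchange two variables of a truth table. -/
def vs (a b X : ℕ) : ℕ :=
  force X fun X => force (V a) fun A => force (V b) fun B => force (A ^^^ B) fun D =>
    (X ^^^ (X &&& D)) ||| ((X >>> (2 ^ b - 2 ^ a)) &&& (A &&& D))
      ||| ((X <<< (2 ^ b - 2 ^ a)) &&& (B &&& D))

def swl (l : List (Fin 20 × Fin 20)) (X : ℕ) : ℕ :=
  l.foldr (fun p X => vs p.1.val p.2.val X) X

def sw (i : Fin 5) (X : ℕ) : ℕ := swl (pairs i) X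

def clo (l : List (Fin 5)) (X : ℕ) : ℕ :=
  l.foldr (fun i X => force X fun X => X ||| sw i X) X

def word : List (Fin 5) := [0, 1, 0, 2, 1, 0, 3, 2, 1, 0, 4, 3, 2, 1, 0]

def ofL (l : List ℕ) : ℕ := l.foldr (fun r X => X ||| 2 ^ r) 0

def lits (i : Fin 6) (k : Fin 20) : List (Fin 20) :=
  (List.finRange 20).filter fun l => decide (i ∈ tri l ∧ (tri l).erase i ⊆ tri k)

def clause (i : Fin 6) (k : Fin 20) : ℕ :=
  (lits i k).foldr (fun l X => X ||| V l.val) ((2 ^ 2 ^ 20 - 1) ^^^ V k.val)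

def tests : List (Fin 6 × Fin 20) :=
  (List.finRange 6).flatMap fun i => (List.finRange 20).map fun k => (i, k)

def adq : ℕ := tests.foldr (fun p X => X &&& clause p.1 p.2) (2 ^ 2 ^ 20 - 1)

theorem reps_len : reps.length = 175 := by decide +kernel

def rep (j : Fin 175) : ℕ := reps[j.val]'(by rw [reps_len]; exact j.isLt)

def repsB (b : ℕ) : List ℕ :=
  ((List.finRange 175).filter fun j => j.val.testBit b).map rep

def L (b : ℕ) : ℕ := clo word (ofL (repsB b))

def chk (b : ℕ) : Bool :=
  force (L b) fun X => (List.finRange 5).all (fun i => Nat.beq (sw i X) X)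
    && Nat.beq (X &&& ofL reps) (ofL (repsB b))

/-! ### Kernel computations -/

theorem chk0 : chk 0 = true := by decide +kernel
theorem chk1 : chk 1 = true := by decide +kernel
theorem chk2 : chk 2 = true := by decide +kernel
theorem chk3 : chk 3 = true := by decide +kernel
theorem chk4 : chk 4 = true := by decide +kernel
theorem chk5 : chk 5 = true := by decide +kernel
theorem chk6 : chk 6 = true := by decide +kernel
theorem chk7 : chk 7 = true := by decide +kernel

theorem cover : Nat.beq (adq &&& clo word (ofL reps)) adq = true := by decide +kernel
theorem reps_adq : Nat.beq (adq &&& ofL reps) (ofL reps) = true := by decide +kernel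
theorem reps_nodup : reps.Nodup := by decide +kernel
theorem reps_lt : ∀ r ∈ reps, r < 2 ^ 20 := by decide +kernel

/-! ### Semantics -/

/-- Value of a truth table at an assignment. -/
def T (X : ℕ) (f : Fin 20 → Bool) : Bool := X.testBit (Nat.ofBits f)

theorem dbl_spec (k t : ℕ) : ∀ j B, k < j →
    (∀ n, B.testBit n = (decide (n < 2 ^ j) && n.testBit k)) →
    ∀ n, (dbl t j B).testBit n = (decide (n < 2 ^ (j + t)) && n.testBit k) := by
  induction t with
  | zero => intro j B _ h n; simpa [dbl] using h n
  | succ t ih =>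
    intro j B hk h n
    rw [dbl, ih (j + 1) _ (by omega) _ n, show j + 1 + t = j + (t + 1) by omega]
    intro n
    rw [Nat.testBit_or, Nat.testBit_shiftLeft, h, h]
    by_cases h1 : n < 2 ^ j
    · have : n < 2 ^ (j + 1) := by rw [pow_succ]; omega
      have h3 : ¬ 2 ^ j ≤ n := by omega
      simp [h1, this, h3]
    · obtain ⟨m, rfl⟩ : ∃ m, n = 2 ^ j + m := ⟨n - 2 ^ j, by omega⟩
      rw [Nat.testBit_two_pow_add_gt hk]
      have : (2 ^ j + m < 2 ^ (j + 1)) ↔ m < 2 ^ j := by rw [pow_succ]; omega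
      simp [this]

theorem V_spec (k n : ℕ) (hk : k < 20) :
    (V k).testBit n = (decide (n < 2 ^ 20) && n.testBit k) := by
  rw [V, dbl_spec k (19 - k) (k + 1) _ (by omega) _ n, show k + 1 + (19 - k) = 20 by omega]
  intro n
  rw [Nat.testBit_shiftLeft, Nat.testBit_two_pow_sub_one]
  by_cases h1 : n < 2 ^ k
  · have h3 : ¬ 2 ^ k ≤ n := by omega
    simp [h3, Nat.testBit_lt_two_pow h1]
  · obtain ⟨m, rfl⟩ : ∃ m, n = 2 ^ k + m := ⟨n - 2 ^ k, by omega⟩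
    have : (2 ^ k + m < 2 ^ (k + 1)) ↔ m < 2 ^ k := by rw [pow_succ]; omega
    rw [Nat.testBit_two_pow_add_eq]
    by_cases hm : m < 2 ^ k
    · simp [this, hm, Nat.testBit_lt_two_pow hm]
    · simp [this, hm]

theorem T_V (k : Fin 20) (f : Fin 20 → Bool) : T (V k.val) f = f k := by
  simp [T, V_spec k.val _ k.isLt, Nat.ofBits_lt_two_pow f]

theorem ofBits_sum {n : ℕ} (f : Fin n → Bool) :
    Nat.ofBits f = ∑ i : Fin n, (f i).toNat * 2 ^ i.val := by
  induction n with
  | zero => simp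
  | succ n ih =>
    rw [Nat.ofBits_succ, ih, Fin.sum_univ_succ, Finset.mul_sum, add_comm]
    simp [pow_succ]
    refine Finset.sum_congr rfl fun i _ => by ring

theorem ofBits_upd {n : ℕ} (f : Fin n → Bool) (a : Fin n) (h : f a = false) :
    Nat.ofBits (Function.update f a true) = Nat.ofBits f + 2 ^ a.val := by
  rw [ofBits_sum, ofBits_sum, ← Finset.add_sum_erase _ _ (Finset.mem_univ a),
    ← Finset.add_sum_erase Finset.univ (fun i => (f i).toNat * 2 ^ i.val) (Finset.mem_univ a)]
  simp [h]
  rw [add_comm]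
  congr 1
  refine Finset.sum_congr rfl fun i hi => ?_
  rw [Function.update_of_ne (Finset.ne_of_mem_erase hi)]

theorem ofBits_swap {n : ℕ} (f : Fin n → Bool) (a b : Fin n) (ha : f a = true)
    (hb : f b = false) :
    Nat.ofBits (f ∘ Equiv.swap a b) + 2 ^ a.val = Nat.ofBits f + 2 ^ b.val := by
  have hab : a ≠ b := by rintro rfl; simp [ha] at hb
  let g := Function.update f a false
  have h1 : f = Function.update g a true := by
    ext i; by_cases hi : i = a
    · subst hi; simp [ha]
    · simp [g, hi]
  have h2 : f ∘ Equiv.swap a b = Function.update g b true := by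
    ext i; by_cases hi : i = a
    · subst hi; simp [g, hab, hb]
    · by_cases hi' : i = b
      · subst hi'; simp [ha]
      · simp [g, hi, hi', Equiv.swap_apply_of_ne_of_ne]
  rw [h2, ofBits_upd g b (by simp [g, hab.symm, hb])]
  conv_rhs => rw [h1, ofBits_upd g a (by simp [g])]
  omega

theorem T_vs (a b : Fin 20) (hab : a < b) (X : ℕ) (f : Fin 20 → Bool) :
    T (vs a.val b.val X) f = T X (f ∘ Equiv.swap a b) := by
  have hA := T_V a f
  have hB := T_V b f
  have hp : 2 ^ a.val < 2 ^ b.val := Nat.pow_lt_pow_right (by norm_num) hab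
  unfold T at *
  simp only [vs, force_eq, Nat.testBit_or, Nat.testBit_xor, Nat.testBit_and,
    Nat.testBit_shiftLeft, Nat.testBit_shiftRight, hA, hB]
  cases ha : f a <;> cases hb : f b
  · have : f ∘ Equiv.swap a b = f := by
      ext i; by_cases hi : i = a
      · subst hi; simp [ha, hb]
      · by_cases hi' : i = b
        · subst hi'; simp [ha, hb]
        · simp [Equiv.swap_apply_of_ne_of_ne hi hi']
    simp [this]
  · have := ofBits_swap f b a hb ha
    rw [Equiv.swap_comm] at this
    have h1 : Nat.ofBits (f ∘ Equiv.swap a b) = Nat.ofBits f - (2 ^ b.val - 2 ^ a.val) := by omega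
    have h2 : 2 ^ b.val - 2 ^ a.val ≤ Nat.ofBits f := by omega
    rw [h1]
    simp [h2]
  · have := ofBits_swap f a b ha hb
    have h1 : Nat.ofBits (f ∘ Equiv.swap a b) = (2 ^ b.val - 2 ^ a.val) + Nat.ofBits f := by omega
    rw [h1]
    simp
  · have : f ∘ Equiv.swap a b = f := by
      ext i; by_cases hi : i = a
      · subst hi; simp [ha, hb]
      · by_cases hi' : i = b
        · subst hi'; simp [ha, hb]
        · simp [Equiv.swap_apply_of_ne_of_ne hi hi']
    simp [this]

/-- The permutation of triples described by a list of pairs. -/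
def pm (l : List (Fin 20 × Fin 20)) (k : Fin 20) : Fin 20 :=
  l.foldl (fun k p => Equiv.swap p.1 p.2 k) k

theorem T_swl (l : List (Fin 20 × Fin 20)) (hl : ∀ p ∈ l, p.1 < p.2) (X : ℕ) :
    ∀ f : Fin 20 → Bool, T (swl l X) f = T X (f ∘ fun k => pm l.reverse k) := by
  induction l with
  | nil => intro f; rfl
  | cons p l ih =>
    intro f
    have : swl (p :: l) X = vs p.1.val p.2.val (swl l X) := rfl
    rw [this, T_vs _ _ (hl p (by simp)), ih (fun q hq => hl q (by simp [hq]))]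
    congr 1
    funext k
    simp [pm]

theorem pairs_lt : ∀ i, ∀ p ∈ pairs i, p.1 < p.2 := by decide +kernel

def sg (i : Fin 5) : Equiv.Perm (Fin 6) := Equiv.swap i.castSucc i.succ

theorem tri_pm : ∀ i k, tri (pm (pairs i).reverse k) = (tri k).image (sg i) := by
  decide +kernel

/-- Characteristic function of a collection. -/
def chi (C : Finset (Finset (Fin 6))) (k : Fin 20) : Bool := decide (tri k ∈ C)

/-- Action of permutations on collections. -/
def act (σ : Equiv.Perm (Fin 6)) (C : Finset (Finset (Fin 6))) : Finset (Finset (Fin 6)) :=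
  C.image (fun T => T.image σ)

theorem act_mul (σ τ : Equiv.Perm (Fin 6)) (C) : act (σ * τ) C = act σ (act τ C) := by
  simp only [act, Finset.image_image]
  congr 1
  funext T
  simp [Finset.image_image]

theorem act_one (C) : act 1 C = C := by
  simp [act]

theorem mem_act (σ : Equiv.Perm (Fin 6)) (C) (S : Finset (Fin 6)) :
    S.image σ ∈ act σ C ↔ S ∈ C := by
  simp only [act]
  exact (Finset.image_injective σ.injective).mem_finset_image

theorem sg_sq (i : Fin 5) : sg i * sg i = 1 := Equiv.swap_mul_self _ _

theorem chi_act (i : Fin 5) (C) :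
    chi (act (sg i) C) = chi C ∘ fun k => pm (pairs i).reverse k := by
  funext k
  simp only [chi, Function.comp, tri_pm]
  congr 1
  rw [← mem_act (sg i) C]
  simp only [Finset.image_image, ← Equiv.Perm.coe_mul, sg_sq]
  simp

theorem T_sw (i : Fin 5) (X : ℕ) (C) : T (sw i X) (chi C) = T X (chi (act (sg i) C)) := by
  rw [sw, T_swl _ (pairs_lt i), chi_act]

theorem T_ofL (l : List ℕ) (f) : T (ofL l) f = decide (Nat.ofBits f ∈ l) := by
  induction l with
  | nil => simp [T, ofL]
  | cons r l ih =>
    have : ofL (r :: l) = ofL l ||| 2 ^ r := rfl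
    unfold T at *
    rw [this, Nat.testBit_or, ih, Nat.testBit_two_pow]
    simp [List.mem_cons, Bool.or_comm, eq_comm]

/-- Collections of triples. -/
def Tri (C : Finset (Finset (Fin 6))) : Prop := ∀ S ∈ C, S.card = 3

theorem tri_card : ∀ k, (tri k).card = 3 := by decide +kernel
theorem tri_surj : ∀ S : Finset (Fin 6), S.card = 3 → ∃ k, tri k = S := by decide +kernel
theorem tri_inj : Function.Injective tri := by
  have : ∀ k l, tri k = tri l → k = l := by decide +kernel
  exact fun k l => this k l

/-- Decoding. -/
def dec (n : ℕ) : Finset (Finset (Fin 6)) :=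
  (Finset.univ.filter fun k : Fin 20 => n.testBit k.val = true).image tri

theorem dec_tri (n) : Tri (dec n) := by
  intro S hS
  simp only [dec, Finset.mem_image] at hS
  obtain ⟨k, -, rfl⟩ := hS
  exact tri_card k

theorem chi_dec (n) (k) : chi (dec n) k = n.testBit k.val := by
  simp [chi, dec, tri_inj.eq_iff]

theorem ofBits_chi_dec (n) (h : n < 2 ^ 20) : Nat.ofBits (chi (dec n)) = n := by
  have : chi (dec n) = fun k : Fin 20 => n.testBit k.val := funext (chi_dec n)
  rw [this, Nat.ofBits_testBit, Nat.mod_eq_of_lt h]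

theorem dec_chi (C) (h : Tri C) : dec (Nat.ofBits (chi C)) = C := by
  ext S
  simp only [dec, Finset.mem_image, Finset.mem_filter, Finset.mem_univ, true_and]
  constructor
  · rintro ⟨k, hk, rfl⟩
    simpa [chi] using hk
  · intro hS
    obtain ⟨k, rfl⟩ := tri_surj S (h S hS)
    exact ⟨k, by simpa [chi] using hS, rfl⟩

theorem rep_mem (j) : rep j ∈ reps := List.getElem_mem _

theorem rep_lt (j) : rep j < 2 ^ 20 := reps_lt _ (rep_mem j)

theorem rep_inj : Function.Injective rep := by
  intro i j h
  exact Fin.ext ((reps_nodup.getElem_inj_iff).1 h)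

theorem exists_rep (r) (h : r ∈ reps) : ∃ j, rep j = r := by
  obtain ⟨n, hn, rfl⟩ := List.getElem_of_mem h
  exact ⟨⟨n, by rw [← reps_len]; exact hn⟩, rfl⟩

theorem clo_sound (l : List (Fin 5)) (C) (hC : Tri C) :
    T (clo l (ofL reps)) (chi C) = true → ∃ σ j, act σ (dec (rep j)) = C := by
  induction l generalizing C with
  | nil =>
    intro h
    have h : T (ofL reps) (chi C) = true := h
    rw [T_ofL] at h
    obtain ⟨j, hj⟩ := exists_rep _ (of_decide_eq_true h)
    exact ⟨1, j, by rw [act_one, hj, dec_chi C hC]⟩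
  | cons i l ih =>
    intro h
    have e : clo (i :: l) (ofL reps) = clo l (ofL reps) ||| sw i (clo l (ofL reps)) := by
      simp only [clo, List.foldr_cons, force_eq]
    rw [e, T, Nat.testBit_or, Bool.or_eq_true] at h
    rcases h with h | h
    · exact ih C hC h
    · have h : T (sw i (clo l (ofL reps))) (chi C) = true := h
      rw [T_sw] at h
      have hC' : Tri (act (sg i) C) := by
        intro S hS
        simp only [act, Finset.mem_image] at hS
        obtain ⟨S, hS, rfl⟩ := hS
        rw [Finset.card_image_of_injective _ (sg i).injective, hC S hS]
      obtain ⟨σ, j, e⟩ := ih _ hC' h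
      exact ⟨sg i * σ, j, by rw [act_mul, e, ← act_mul, sg_sq, act_one]⟩

theorem T_full (f) : T (2 ^ 2 ^ 20 - 1) f = true := by
  rw [T, Nat.testBit_two_pow_sub_one, decide_eq_true]
  exact Nat.ofBits_lt_two_pow f

theorem T_clause (i k f) :
    T (clause i k) f = true ↔ (f k = true → ∃ l ∈ lits i k, f l = true) := by
  unfold clause
  have : ∀ (ls : List (Fin 20)) (Y : ℕ),
      T (ls.foldr (fun l X => X ||| V l.val) Y) f = true ↔
        T Y f = true ∨ ∃ l ∈ ls, f l = true := by
    intro ls Y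
    induction ls with
    | nil => simp
    | cons l ls ih =>
      rw [List.foldr_cons, T, Nat.testBit_or, Bool.or_eq_true]
      have h2 := T_V l f
      unfold T at h2 ih ⊢
      rw [ih, h2]
      simp only [List.mem_cons, exists_eq_or_imp]
      rw [or_assoc, or_comm (b := f l = true)]
  rw [this]
  have h1 := T_full f
  have h2 := T_V k f
  rw [T] at h1 h2
  rw [T, Nat.testBit_xor, h1, h2]
  cases f k <;> simp

theorem T_adq (f) : T adq f = true ↔ ∀ i k, f k = true → ∃ l ∈ lits i k, f l = true := by
  unfold adq
  have : ∀ (ps : List (Fin 6 × Fin 20)),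
      T (ps.foldr (fun p X => X &&& clause p.1 p.2) (2 ^ 2 ^ 20 - 1)) f = true ↔
        ∀ p ∈ ps, T (clause p.1 p.2) f = true := by
    intro ps
    induction ps with
    | nil => simp only [List.foldr_nil, T_full]; simp
    | cons p ps ih =>
      rw [List.foldr_cons, T, Nat.testBit_and, Bool.and_eq_true]
      unfold T at ih ⊢
      rw [ih]
      simp only [List.mem_cons, forall_eq_or_imp]
      tauto
  rw [this]
  simp only [T_clause]
  constructor
  · intro h i k
    exact h (i, k) (by simp [tests])
  · intro h p _
    exact h p.1 p.2

theorem adq_iff (C) (hC : Tri C) : T adq (chi C) = true ↔ Adequate C := by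
  rw [T_adq]
  simp only [chi, lits, List.mem_filter, List.mem_finRange, true_and, decide_eq_true_eq]
  constructor
  · intro h i S hS
    obtain ⟨k, rfl⟩ := tri_surj S (hC S hS)
    obtain ⟨l, ⟨h1, h2⟩, h3⟩ := h i k hS
    refine ⟨(tri l).erase i, h2, ?_, by simp, ?_⟩
    · rw [Finset.card_erase_of_mem h1, tri_card]
    · rwa [Finset.insert_erase h1]
  · intro h i k hk
    obtain ⟨S, h1, -, h3, h4⟩ := h i _ hk
    obtain ⟨l, hl⟩ := tri_surj _ (hC _ h4)
    refine ⟨l, ⟨by simp [hl], ?_⟩, by rwa [hl]⟩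
    rwa [hl, Finset.erase_insert h3]

theorem chk_all (b : ℕ) (hb : b < 8) : chk b = true := by
  interval_cases b
  exacts [chk0, chk1, chk2, chk3, chk4, chk5, chk6, chk7]

theorem L_gen (b : ℕ) (hb : b < 8) (i : Fin 5) : sw i (L b) = L b := by
  have h := chk_all b hb
  rw [chk, force_eq, Bool.and_eq_true, List.all_eq_true] at h
  exact Nat.eq_of_beq_eq_true (h.1 i (List.mem_finRange i))

theorem L_reps (b : ℕ) (hb : b < 8) : L b &&& ofL reps = ofL (repsB b) := by
  have h := chk_all b hb
  rw [chk, force_eq, Bool.and_eq_true] at h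
  exact Nat.eq_of_beq_eq_true h.2

theorem L_inv (b : ℕ) (hb : b < 8) (σ : Equiv.Perm (Fin 6)) :
    ∀ C, T (L b) (chi (act σ C)) = T (L b) (chi C) := by
  have hσ : σ ∈ Submonoid.closure (Set.range fun i : Fin 5 => Equiv.swap i.castSucc i.succ) := by
    rw [Equiv.Perm.mclosure_swap_castSucc_succ]; trivial
  induction hσ using Submonoid.closure_induction with
  | mem x hx =>
    obtain ⟨i, rfl⟩ := hx
    intro C
    have := T_sw i (L b) C
    rw [L_gen b hb] at this
    exact this.symm
  | one => intro C; rw [act_one]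
  | mul x y _ _ hx hy => intro C; rw [act_mul, hx, hy]

theorem L_rep (b : ℕ) (hb : b < 8) (j : Fin 175) :
    T (L b) (chi (dec (rep j))) = j.val.testBit b := by
  have h1 : T (ofL reps) (chi (dec (rep j))) = true := by
    rw [T_ofL, ofBits_chi_dec _ (rep_lt j)]
    simpa using rep_mem j
  have h2 : T (ofL (repsB b)) (chi (dec (rep j))) = j.val.testBit b := by
    rw [T_ofL, ofBits_chi_dec _ (rep_lt j)]
    simp [repsB, rep_inj.eq_iff]
  rw [← h2, ← L_reps b hb]
  unfold T at h1 ⊢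
  rw [Nat.testBit_and, h1, Bool.and_true]

theorem dec_adq (j) : Adequate (dec (rep j)) := by
  rw [← adq_iff _ (dec_tri _)]
  have h1 : T (ofL reps) (chi (dec (rep j))) = true := by
    rw [T_ofL, ofBits_chi_dec _ (rep_lt j)]
    simpa using rep_mem j
  have h := Nat.eq_of_beq_eq_true reps_adq
  rw [← h, T, Nat.testBit_and, Bool.and_eq_true] at h1
  exact h1.1

theorem exists_orbit (C) (hC : Tri C) (h : Adequate C) : ∃ σ j, act σ (dec (rep j)) = C := by
  rw [← adq_iff C hC, ← Nat.eq_of_beq_eq_true cover, T, Nat.testBit_and, Bool.and_eq_true] at h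
  exact clo_sound word C hC h.2

end Orb

/-- Orbit equivalence: two adequate collections are related if some permutation
of `Fin 6` maps one to the other. -/
theorem stmt_13 :
    Nat.card (Quot (fun (C C' : {C : Finset (Finset (Fin 6)) //
        (∀ T ∈ C, T.card = 3) ∧ Adequate C}) =>
      ∃ σ : Equiv.Perm (Fin 6),
        C.1.image (fun T => T.image σ) = C'.1)) = 175 := by
  open Orb in
  rw [← Nat.card_fin 175]
  symm
  refine Nat.card_eq_of_bijective
    (fun j : Fin 175 => Quot.mk _ ⟨dec (rep j), dec_tri _, dec_adq j⟩) ⟨?_, ?_⟩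
  · intro j j' h
    have key : ∀ b, b < 8 → j.val.testBit b = j'.val.testBit b := by
      intro b hb
      have := congrArg (Quot.lift (fun C => T (L b) (chi C.1)) (by
        rintro C C' ⟨σ, hσ⟩
        show T (L b) (chi C.1) = T (L b) (chi C'.1)
        rw [← hσ]
        exact (L_inv b hb σ C.1).symm)) h
      have this : T (L b) (chi (dec (rep j))) = T (L b) (chi (dec (rep j'))) := this
      rwa [L_rep b hb, L_rep b hb] at this
    apply Fin.ext
    apply Nat.eq_of_testBit_eq
    intro b
    by_cases hb : b < 8
    · exact key b hb
    · have hp : 2 ^ 8 ≤ 2 ^ b := Nat.pow_le_pow_right (by norm_num) (by omega)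
      have := j.isLt
      have := j'.isLt
      rw [Nat.testBit_lt_two_pow (by omega), Nat.testBit_lt_two_pow (by omega)]
  · intro q
    induction q using Quot.ind with
    | mk C =>
      obtain ⟨C, hC, h⟩ := C
      obtain ⟨σ, j, e⟩ := exists_orbit C hC h
      exact ⟨j, Quot.sound ⟨σ, e⟩⟩
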